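/- arXiv:2208.00582 — 2 statements merged into one kernel-verified Lean document; each statement's English description precedes it below -/
import Mathlib

section
/- Fix ε > 0 and a double-well potential W. Let u : ℝ → [−1,1] be a smooth 2π-periodic function satisfying ε² u'' = W'(u) on ℝ, and suppose the zero set of u in [0, 2π) consists of exactly m points, with m ≥ 1. Then m is even and u(t + 2π/m) = −u(t) for every t ∈ ℝ. -/
open Real Filter Set

/-- `W` is a double-well potential. -/
structure IsDoubleWell (W : ℝ → ℝ) : Prop where
  smooth : ContDiff ℝ (⊤ : ℕ∞) W
  nonneg : ∀ x, 0 ≤ W x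
  eq_zero_iff : ∀ x, W x = 0 ↔ x = 1 ∨ x = -1
  even : ∀ x, W (-x) = W x
  deriv2_pos_one : 0 < iteratedDeriv 2 W 1
  deriv2_pos_neg_one : 0 < iteratedDeriv 2 W (-1)
  mono : StrictMonoOn (fun x => deriv W x / x) (Set.Ioo (0 : ℝ) 1)
  anti : StrictAntiOn (fun x => deriv W x / x) (Set.Ioo (-1 : ℝ) 0)

/-!
The equation is Newton's equation `u'' = f (u)` with the odd force `f = ε⁻² W'`. By uniqueness for
the initial value problem, `u` is odd about each of its zeros and even about each of its critical
points. Let `a < b` be consecutive zeros. Rolle's theorem gives a critical point in `(a, b)`, and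
reflection in it sends zeros to zeros, so it can only be the midpoint. Composing the reflections in
`(a + b) / 2` and in `a` gives `u (t + (b - a)) = -u t`. Hence the zeros form the arithmetic
progression `a + (b - a) ℤ`, so a period containing `m` of them has length `m (b - a)`; and `m` odd
would make the period an antiperiod as well, forcing `u = 0`.
-/

section PeriodicPredicates

lemma exists_isLeast_gt_of_periodic {α : Type*} [AddCommGroup α] [LinearOrder α]
    [IsOrderedAddMonoid α] [Archimedean α] {P : α → Prop} {a s T : α} (hT : 0 < T)
    (hP : Function.Periodic P T) (hfin : {t ∈ Ico s (s + T) | P t}.Finite) (ha : P a) :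
    ∃ b, IsLeast {t | a < t ∧ P t} b := by
  have hfin_right : {t ∈ Ioc a (a + T) | P t}.Finite := by
    refine (hfin.image (toIocMod hT a)).subset fun t ⟨ht, hPt⟩ ↦
      ⟨toIcoMod hT s t, ⟨toIcoMod_mem_Ico hT s t, ?_⟩, ?_⟩
    · rwa [← self_sub_toIcoDiv_zsmul, hP.sub_zsmul_eq]
    · rw [toIocMod_toIcoMod, (toIocMod_eq_self hT).2 ht]
  have hmem : a + T ∈ {t ∈ Ioc a (a + T) | P t} :=
    ⟨right_mem_Ioc.2 (lt_add_of_pos_right a hT), by rwa [hP a]⟩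
  obtain ⟨b, ⟨⟨hab, hbT⟩, hb⟩, hmin⟩ := exists_min_image _ id hfin_right ⟨a + T, hmem⟩
  refine ⟨b, ⟨hab, hb⟩, fun t ⟨hat, ht⟩ ↦ ?_⟩
  rcases le_or_gt t (a + T) with htT | htT
  · exact hmin t ⟨⟨hat, htT⟩, ht⟩
  · exact hbT.trans htT.le

lemma iff_exists_eq_add_zsmul_of_periodic {α : Type*} [AddCommGroup α] [LinearOrder α]
    [IsOrderedAddMonoid α] [Archimedean α] {P : α → Prop} {a d : α} (hd : 0 < d)
    (hP : Function.Periodic P d) (ha : P a) (hgap : ∀ t ∈ Ioo a (a + d), ¬P t) (t : α) :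
    P t ↔ ∃ k : ℤ, t = a + k • d := by
  refine ⟨fun ht ↦ ⟨toIcoDiv hd a t, ?_⟩, ?_⟩
  · have hmod : P (toIcoMod hd a t) := by rwa [← self_sub_toIcoDiv_zsmul, hP.sub_zsmul_eq]
    have hmem := toIcoMod_mem_Ico hd a t
    have heq : a = toIcoMod hd a t :=
      hmem.1.eq_or_lt.resolve_right fun hlt ↦ hgap _ ⟨hlt, hmem.2⟩ hmod
    calc t = toIcoMod hd a t + toIcoDiv hd a t • d := (toIcoMod_add_toIcoDiv_zsmul hd a t).symm
      _ = a + toIcoDiv hd a t • d := by rw [← heq]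
  · rintro ⟨k, rfl⟩
    rwa [hP.zsmul k a]

variable {K : Type*} [Field K] [LinearOrder K] [IsStrictOrderedRing K] [FloorRing K]

lemma ncard_setOf_add_zsmul_mem_Ico {d : K} (hd : 0 < d) (a s : K) (k : ℕ) :
    {j : ℤ | a + j • d ∈ Ico s (s + k • d)}.ncard = k := by
  have hceil : {j : ℤ | a + j • d ∈ Ico s (s + k • d)} =
      Finset.Ico ⌈(s - a) / d⌉ (⌈(s - a) / d⌉ + k) := by
    ext j
    have hleft : s ≤ a + j * d ↔ ⌈(s - a) / d⌉ ≤ j := by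
      rw [Int.ceil_le, div_le_iff₀ hd, sub_le_iff_le_add']
    have hright : a + j * d < s + k * d ↔ j < ⌈(s - a) / d⌉ + k := by
      rw [← sub_lt_iff_lt_add (a := j), Int.lt_ceil, lt_div_iff₀ hd, Int.cast_sub,
        Int.cast_natCast, sub_mul]
      constructor <;> intro h <;> linarith
    simp only [mem_ofPred_eq, mem_Ico, Finset.coe_Ico, zsmul_eq_mul, nsmul_eq_mul, hleft, hright]
  rw [hceil, ncard_coe_finset, Int.card_Ico, add_sub_cancel_left, Int.toNat_natCast]

lemma eq_ncard_nsmul_of_periodic {P : K → Prop} {a d T : K} (hd : 0 < d) (hT : 0 ≤ T)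
    (hPd : Function.Periodic P d) (hPT : Function.Periodic P T) (ha : P a)
    (hgap : ∀ t ∈ Ioo a (a + d), ¬P t) (s : K) :
    T = {t ∈ Ico s (s + T) | P t}.ncard • d := by
  have hP := iff_exists_eq_add_zsmul_of_periodic hd hPd ha hgap
  obtain ⟨k, rfl⟩ : ∃ k : ℕ, T = k • d := by
    obtain ⟨k, hk⟩ := (hP (a + T)).1 (by rwa [hPT a])
    rw [add_right_inj] at hk
    lift k to ℕ using (zsmul_left_strictMono hd).le_iff_le.1 (by simpa [← hk] using hT)
    exact ⟨k, by rw [hk, natCast_zsmul]⟩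
  have hset : {t ∈ Ico s (s + k • d) | P t} =
      (fun j : ℤ ↦ a + j • d) '' {j : ℤ | a + j • d ∈ Ico s (s + k • d)} := by
    ext t
    simp only [mem_ofPred_eq, hP, mem_image]
    constructor
    · rintro ⟨ht, j, rfl⟩
      exact ⟨j, ht, rfl⟩
    · rintro ⟨j, hj, rfl⟩
      exact ⟨hj, j, rfl⟩
  have hinj : Function.Injective fun j : ℤ ↦ a + j • d :=
    (add_right_injective a).comp (zsmul_left_strictMono hd).injective
  rw [hset, ncard_image_of_injective _ hinj, ncard_setOf_add_zsmul_mem_Ico hd]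

end PeriodicPredicates

section SecondOrderEquation

variable {E : Type*} [NormedAddCommGroup E] [NormedSpace ℝ E] {f : E → E}

lemma eq_of_hasDerivAt_of_locallyLipschitz (hf : LocallyLipschitz f) {x y : ℝ → E} {t₀ : ℝ}
    (hx : ∀ t, HasDerivAt x (f (x t)) t) (hy : ∀ t, HasDerivAt y (f (y t)) t)
    (h₀ : x t₀ = y t₀) : x = y := by
  have hxc : Continuous x := continuous_iff_continuousAt.2 fun t ↦ (hx t).continuousAt
  have hyc : Continuous y := continuous_iff_continuousAt.2 fun t ↦ (hy t).continuousAt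
  ext t
  obtain ⟨a, ha⟩ := exists_lt (min t₀ t)
  obtain ⟨b, hb⟩ := exists_gt (max t₀ t)
  rw [lt_min_iff] at ha
  rw [max_lt_iff] at hb
  obtain ⟨K, hK⟩ : ∃ K, LipschitzOnWith K f (x '' Icc a b ∪ y '' Icc a b) :=
    hf.locallyLipschitzOn.exists_lipschitzOnWith_of_compact
      ((isCompact_Icc.image hxc).union (isCompact_Icc.image hyc))
  exact ODE_solution_unique_of_mem_Ioo (v := fun _ ↦ f) (fun _ _ ↦ hK) ⟨ha.1, hb.1⟩
    (fun r hr ↦ ⟨hx r, .inl (mem_image_of_mem x (Ioo_subset_Icc_self hr))⟩)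
    (fun r hr ↦ ⟨hy r, .inr (mem_image_of_mem y (Ioo_subset_Icc_self hr))⟩) h₀ ⟨ha.2, hb.2⟩

/-- `u` is a solution, on the whole real line, of the autonomous second-order equation
`u'' = f (u)` (Newton's equation with force field `f`). Differentiability of `u` is a separate field
because `deriv u` takes the junk value `0` where `u` is not differentiable. -/
structure IsNewtonSolution (f : E → E) (u : ℝ → E) : Prop where
  differentiable : Differentiable ℝ u
  hasDerivAt_deriv (t : ℝ) : HasDerivAt (deriv u) (f (u t)) t

namespace IsNewtonSolution

variable {u w : ℝ → E}

lemma of_smul_iteratedDeriv_two {c : ℝ} (hc : c ≠ 0) (hu : ContDiff ℝ 2 u)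
    (h : ∀ t, c • iteratedDeriv 2 u t = f (u t)) : IsNewtonSolution (c⁻¹ • f) u where
  differentiable := hu.differentiable two_ne_zero
  hasDerivAt_deriv t := by
    rw [Pi.smul_apply, ← h, inv_smul_smul₀ hc, iteratedDeriv_succ, iteratedDeriv_one]
    exact (hu.differentiable_deriv_two t).hasDerivAt

lemma neg (hodd : Function.Odd f) (hu : IsNewtonSolution f u) :
    IsNewtonSolution f (-u) where
  differentiable := hu.differentiable.neg
  hasDerivAt_deriv t := by
    rw [deriv.neg', Pi.neg_apply, hodd]
    exact (hu.hasDerivAt_deriv t).neg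

lemma comp_const_sub (hu : IsNewtonSolution f u) (s : ℝ) :
    IsNewtonSolution f fun t ↦ u (s - t) where
  differentiable := hu.differentiable.comp (differentiable_id.const_sub s)
  hasDerivAt_deriv t := by
    have hderiv : deriv (fun t ↦ u (s - t)) = fun t ↦ -deriv u (s - t) :=
      funext fun t ↦ deriv_comp_const_sub ..
    rw [hderiv]
    simpa [Pi.neg_def] using ((hu.hasDerivAt_deriv (s - t)).comp_const_sub s t).neg

lemma eq_of_initial (hf : LocallyLipschitz f) (hu : IsNewtonSolution f u)
    (hw : IsNewtonSolution f w) {t₀ : ℝ} (h : u t₀ = w t₀)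
    (h' : deriv u t₀ = deriv w t₀) : u = w := by
  have hphase : LocallyLipschitz fun p : E × E ↦ (p.2, f p.1) :=
    LipschitzWith.prod_snd.locallyLipschitz.prodMk
      (hf.comp LipschitzWith.prod_fst.locallyLipschitz)
  have heq : (fun t ↦ (u t, deriv u t)) = fun t ↦ (w t, deriv w t) :=
    eq_of_hasDerivAt_of_locallyLipschitz hphase (t₀ := t₀)
      (fun t ↦ (hu.differentiable t).hasDerivAt.prodMk (hu.hasDerivAt_deriv t))
      (fun t ↦ (hw.differentiable t).hasDerivAt.prodMk (hw.hasDerivAt_deriv t))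
      (Prod.ext h h')
  exact funext fun t ↦ congrArg Prod.fst (congrFun heq t)

lemma apply_two_mul_sub_of_deriv_eq_zero (hf : LocallyLipschitz f)
    (hu : IsNewtonSolution f u) {c : ℝ} (hc : deriv u c = 0) (t : ℝ) :
    u (2 * c - t) = u t := by
  have hcc : 2 * c - c = c := by ring
  refine congrFun (eq_of_initial hf (hu.comp_const_sub (2 * c)) hu (t₀ := c) ?_ ?_) t
  · rw [hcc]
  · rw [deriv_comp_const_sub, hcc, hc, neg_zero]

lemma apply_two_mul_sub_of_eq_zero (hf : LocallyLipschitz f) (hodd : Function.Odd f)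
    (hu : IsNewtonSolution f u) {a : ℝ} (ha : u a = 0) (t : ℝ) :
    u (2 * a - t) = -u t := by
  have haa : 2 * a - a = a := by ring
  refine congrFun (eq_of_initial hf (hu.comp_const_sub (2 * a)) (hu.neg hodd) (t₀ := a) ?_ ?_) t
  · rw [haa, Pi.neg_apply, ha, neg_zero]
  · rw [deriv_comp_const_sub, haa, deriv.neg]

end IsNewtonSolution

end SecondOrderEquation

namespace IsNewtonSolution

variable {f u : ℝ → ℝ}

lemma deriv_midpoint_eq_zero (hf : LocallyLipschitz f) (hu : IsNewtonSolution f u) {a b : ℝ}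
    (hab : a < b) (ha : u a = 0) (hb : u b = 0) (hgap : ∀ t ∈ Ioo a b, u t ≠ 0) :
    deriv u ((a + b) / 2) = 0 := by
  obtain ⟨c, ⟨hac, hcb⟩, hc⟩ :=
    exists_deriv_eq_zero hab hu.differentiable.continuous.continuousOn (ha.trans hb.symm)
  have hsymm := hu.apply_two_mul_sub_of_deriv_eq_zero hf hc
  have hle : b ≤ 2 * c - a := by
    by_contra! hlt
    exact hgap (2 * c - a) ⟨by linarith, hlt⟩ (by rw [hsymm, ha])
  have hge : 2 * c - b ≤ a := by
    by_contra! hlt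
    exact hgap (2 * c - b) ⟨hlt, by linarith⟩ (by rw [hsymm, hb])
  rwa [show (a + b) / 2 = c by linarith]

lemma antiperiodic_sub_of_consecutive_zeros (hf : LocallyLipschitz f) (hodd : Function.Odd f)
    (hu : IsNewtonSolution f u) {a b : ℝ} (hab : a < b) (ha : u a = 0) (hb : u b = 0)
    (hgap : ∀ t ∈ Ioo a b, u t ≠ 0) : Function.Antiperiodic u (b - a) := fun t ↦ by
  have hmid := hu.deriv_midpoint_eq_zero hf hab ha hb hgap
  calc u (t + (b - a)) = u (2 * ((a + b) / 2) - (2 * a - t)) := by ring_nf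
    _ = u (2 * a - t) := hu.apply_two_mul_sub_of_deriv_eq_zero hf hmid _
    _ = -u t := hu.apply_two_mul_sub_of_eq_zero hf hodd ha t

end IsNewtonSolution

lemma odd_deriv_of_even {𝕜 F : Type*} [NontriviallyNormedField 𝕜] [NormedAddCommGroup F]
    [NormedSpace 𝕜 F] {g : 𝕜 → F} (hg : Function.Even g) : Function.Odd (deriv g) := fun x ↦ by
  have h := deriv_comp_neg g (-x)
  rw [neg_neg] at h
  rw [← h, funext hg]

theorem phase_transition_circle_antiperiodic_general {f u : ℝ → ℝ} (hf : LocallyLipschitz f)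
    (hodd : Function.Odd f) (hu : IsNewtonSolution f u) {T : ℝ} (hT : Function.Periodic u T)
    {m : ℕ} (hm : m ≠ 0) (hcard : {t ∈ Ico 0 T | u t = 0}.ncard = m) :
    Even m ∧ Function.Antiperiodic u (T / m) := by
  obtain ⟨a, ⟨ha₀, haT⟩, ha⟩ : {t ∈ Ico 0 T | u t = 0}.Nonempty :=
    nonempty_of_ncard_ne_zero (hcard ▸ hm)
  have hTpos : 0 < T := ha₀.trans_lt haT
  have hzeroT : Function.Periodic (u · = 0) T := hT.comp (· = 0)
  have hfin : {t ∈ Ico 0 (0 + T) | u t = 0}.Finite := by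
    rw [zero_add]
    exact finite_of_ncard_ne_zero (hcard ▸ hm)
  obtain ⟨b, ⟨hab, hb⟩, hleast⟩ := exists_isLeast_gt_of_periodic hTpos hzeroT hfin ha
  have hgap : ∀ t ∈ Ioo a b, u t ≠ 0 := fun t ht h ↦ ht.2.not_ge (hleast ⟨ht.1, h⟩)
  have hanti := hu.antiperiodic_sub_of_consecutive_zeros hf hodd hab ha hb hgap
  have hzero : Function.Periodic (u · = 0) (b - a) := fun t ↦ by simp only [hanti t, neg_eq_zero]
  have hTm : T = m • (b - a) := by
    have h := eq_ncard_nsmul_of_periodic (sub_pos.2 hab) hTpos.le hzero hzeroT ha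
      (by rwa [add_sub_cancel]) 0
    rwa [zero_add, hcard] at h
  constructor
  · by_contra hm_even
    obtain ⟨n, rfl⟩ := Nat.not_even_iff_odd.1 hm_even
    have hmid : (a + b) / 2 ∈ Ioo a b := ⟨by linarith, by linarith⟩
    have hantiT := hanti.odd_nsmul_antiperiodic n ((a + b) / 2)
    rw [← hTm, hT] at hantiT
    exact hgap _ hmid (self_eq_neg.1 hantiT)
  · rwa [hTm, nsmul_eq_mul, mul_div_cancel_left₀ _ (Nat.cast_ne_zero.2 hm)]

/-- If a `2π`-periodic one-dimensional double-well phase transition has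
exactly `m ≥ 1` zeros in `[0, 2π)`, then `m` is even and `u (t + 2π/m) = -u t` for all
`t`. -/
theorem phase_transition_circle_antiperiodic
    {ε : ℝ} (hε : 0 < ε) {W : ℝ → ℝ} (hW : IsDoubleWell W)
    (u : ℝ → ℝ) (hu_smooth : ContDiff ℝ (⊤ : ℕ∞) u)
    (hu_mem : ∀ t, u t ∈ Set.Icc (-1 : ℝ) 1)
    (hu_per : ∀ t, u (t + 2 * π) = u t)
    (hODE : ∀ t, ε ^ 2 * iteratedDeriv 2 u t = deriv W (u t))
    {m : ℕ} (hm : 1 ≤ m)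
    (hcard : {t ∈ Set.Ico (0 : ℝ) (2 * π) | u t = 0}.ncard = m) :
    Even m ∧ ∀ t : ℝ, u (t + 2 * π / m) = -u t := by
  have hW' : ContDiff ℝ 1 (deriv W) :=
    mod_cast contDiff_infty.1 (contDiff_infty_iff_deriv.1 hW.smooth).2 1
  have hf : LocallyLipschitz ((ε ^ 2)⁻¹ • deriv W) :=
    ContDiff.locallyLipschitz (hW'.const_smul (ε ^ 2)⁻¹)
  have hu : IsNewtonSolution ((ε ^ 2)⁻¹ • deriv W) u :=
    .of_smul_iteratedDeriv_two (pow_ne_zero 2 hε.ne') (contDiff_infty.1 hu_smooth 2) hODE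
  exact phase_transition_circle_antiperiodic_general hf
    ((odd_deriv_of_even hW.even).const_smul _) hu hu_per (Nat.one_le_iff_ne_zero.1 hm) hcard
end

section
/- (Model solutions.) Fix ℓ > 0 and a double-well potential W. There exists ε₀ > 0, depending on ℓ and W, such that for every ε ∈ (0, ε₀) there is a smooth function u : [−ℓ, ℓ] → [0, 1] satisfying ε² u'' = W'(u) on [−ℓ, ℓ], with u(−ℓ) = u(ℓ) = 0 and u(t) > 0 for all t ∈ (−ℓ, ℓ). -/
/-!
The solution is found by shooting from the midpoint. Let `u_a` solve `ε² u'' = W'(u)` with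
`u(0) = a` and `u'(0) = 0`. It is even, and conservation of `ε² u'² / 2 - W(u)` keeps it below its
initial height `a`. Linearised at `0` the equation is `u'' = -w² u` with `w = √(-W''(0)) / ε`, whose
even solutions vanish at `π / (2w)`, and this is less than `ℓ` exactly when
`ε < (2ℓ / π) √(-W''(0))`. For such `ε` and small `a`, `u_a` therefore becomes nonpositive in
`[-ℓ, ℓ]`, whereas `u_1 ≡ 1`. As the minimum of `u_a` over `[-ℓ, ℓ]` depends continuously on `a`, it
is zero for some `a ∈ (0, 1)`. A zero inside the interval would be a local minimum, where `u' = 0`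
and hence `W(0) = W(a)` by conservation of energy; this is impossible because `W` is strictly
decreasing on `[0, 1]`. So `u_a` vanishes only at `±ℓ`.
-/

open Real Filter Set

open scoped Topology ContDiff NNReal

section IntegralCurves

variable {E : Type*} [NormedAddCommGroup E] [NormedSpace ℝ E] {F : E → E} {K : ℝ≥0}

lemma exists_isIntegralCurveOn_of_lipschitzWith [CompleteSpace E] (hF : LipschitzWith K F)
    {T : ℝ} (hT : 0 ≤ T) (hKT : (K + 1) * T ≤ 1) (x : E) :
    ∃ γ : ℝ → E, γ 0 = x ∧ IsIntegralCurveOn γ (fun _ ↦ F) (Ioo (-T) T) := by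
  have hPL : IsPicardLindelof (fun _ ↦ F) (⟨0, by simpa using hT⟩ : Icc (-T) T) x
      ‖F x‖₊ 0 ((K + 1) * ‖F x‖₊) K := by
    refine ⟨fun _ _ ↦ hF.lipschitzOnWith, fun _ _ ↦ continuousOn_const, fun _ _ y hy ↦ ?_, ?_⟩
    · calc ‖F y‖ ≤ ‖F y - F x‖ + ‖F x‖ := norm_le_norm_sub_add _ _
        _ ≤ K * ‖F x‖ + ‖F x‖ := by
          gcongr
          exact (hF.norm_sub_le y x).trans (by gcongr; exact mem_closedBall_iff_norm.1 hy)
        _ = ↑((K + 1) * ‖F x‖₊) := by push_cast; ring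
    · calc ((K + 1) * ‖F x‖₊ : ℝ≥0) * max (T - 0) (0 - -T)
          = (K + 1) * T * ‖F x‖ := by
            simp only [NNReal.coe_mul, NNReal.coe_add, NNReal.coe_one, coe_nnnorm, sub_zero,
              zero_sub, neg_neg, max_self]
            ring
        _ ≤ ‖F x‖ := mul_le_of_le_one_left (norm_nonneg _) hKT
        _ = ‖F x‖₊ - (0 : ℝ≥0) := by simp
  obtain ⟨γ, hγ0, hγ⟩ := hPL.exists_eq_forall_mem_Icc_hasDerivWithinAt₀
  exact ⟨γ, hγ0, fun t ht ↦ (hγ t (Ioo_subset_Icc_self ht)).mono Ioo_subset_Icc_self⟩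

open scoped Manifold in
lemma exists_isIntegralCurve_of_lipschitzWith [CompleteSpace E] (hF : ContDiff ℝ 1 F)
    (hK : LipschitzWith K F) (x : E) :
    ∃ γ : ℝ → E, γ 0 = x ∧ IsIntegralCurve γ fun _ ↦ F := by
  have hT : (0 : ℝ) < (K + 1 : ℝ)⁻¹ := by positivity
  obtain ⟨γ, hγ0, hγ⟩ := exists_isMIntegralCurve_of_isMIntegralCurveOn (I := 𝓘(ℝ, E)) (v := F)
    (contMDiff_vectorSpace_iff_contDiff.2 hF) hT (fun y ↦ by
      obtain ⟨γ, hγ0, hγ⟩ := exists_isIntegralCurveOn_of_lipschitzWith hK hT.le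
        (mul_inv_cancel₀ (by positivity)).le y
      exact ⟨γ, hγ0, fun t ht ↦ (hγ t ht).hasFDerivWithinAt.hasMFDerivWithinAt⟩) x
  refine ⟨γ, hγ0, fun t ↦ ?_⟩
  have hγt : HasFDerivAt γ ((1 : ℝ →L[ℝ] ℝ).smulRight (F (γ t))) t := (hγ t).hasFDerivAt
  simpa using hγt.hasDerivAt

lemma dist_le_of_isIntegralCurve (hK : LipschitzWith K F) {γ γ' : ℝ → E}
    (hγ : IsIntegralCurve γ fun _ ↦ F) (hγ' : IsIntegralCurve γ' fun _ ↦ F) {t : ℝ} (ht : 0 ≤ t) :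
    dist (γ t) (γ' t) ≤ dist (γ 0) (γ' 0) * exp (K * t) := by
  simpa using dist_le_of_trajectories_ODE (v := fun _ ↦ F) (fun _ ↦ hK)
    hγ.continuous.continuousOn (fun s _ ↦ (hγ s).hasDerivWithinAt)
    hγ'.continuous.continuousOn (fun s _ ↦ (hγ' s).hasDerivWithinAt) le_rfl t ⟨ht, le_rfl⟩

end IntegralCurves

section Newton

variable {E : Type*} [NormedAddCommGroup E] {g : E → E} {K : ℝ≥0}

/-- The vector field `(x, p) ↦ (p, g x)` on phase space, whose integral curves are the pairs
`(u, u')` with `u'' = g(u)`. -/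
def newtonField (g : E → E) (z : E × E) : E × E := (z.2, g z.1)

lemma lipschitzWith_newtonField (hK : LipschitzWith K g) :
    LipschitzWith (max 1 K) (newtonField g) := by
  simpa using! LipschitzWith.prod_snd.prodMk (hK.comp LipschitzWith.prod_fst)

variable [NormedSpace ℝ E] {u v : ℝ → E}

/-- `u` is a solution, defined for all times, of Newton's equation `u'' = g(u)`. -/
structure IsNewtonSolution_s5 (g : E → E) (u : ℝ → E) : Prop where
  hasDerivAt (t : ℝ) : HasDerivAt u (deriv u t) t
  hasDerivAt_deriv (t : ℝ) : HasDerivAt (deriv u) (g (u t)) t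

lemma exists_isNewtonSolution [CompleteSpace E] (hg : ContDiff ℝ 1 g) (hK : LipschitzWith K g)
    (a b : E) : ∃ u : ℝ → E, IsNewtonSolution_s5 g u ∧ u 0 = a ∧ deriv u 0 = b := by
  obtain ⟨γ, hγ0, hγ⟩ := exists_isIntegralCurve_of_lipschitzWith (F := newtonField g)
    (contDiff_snd.prodMk (hg.comp contDiff_fst)) (lipschitzWith_newtonField hK) (a, b)
  have hu (t : ℝ) : HasDerivAt (fun s ↦ (γ s).1) (γ t).2 t := (hγ t).fst
  have hu' : deriv (fun s ↦ (γ s).1) = fun t ↦ (γ t).2 := funext fun t ↦ (hu t).deriv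
  refine ⟨fun t ↦ (γ t).1, ⟨fun t ↦ (hu t).differentiableAt.hasDerivAt, fun t ↦ ?_⟩, ?_, ?_⟩
  · rw [hu']
    exact (hγ t).snd
  · simp [hγ0]
  · simp [hu', hγ0]

namespace IsNewtonSolution_s5

lemma continuous (hu : IsNewtonSolution_s5 g u) : Continuous u :=
  continuous_iff_continuousAt.2 fun t ↦ (hu.hasDerivAt t).continuousAt

lemma iteratedDeriv_two (hu : IsNewtonSolution_s5 g u) (t : ℝ) : iteratedDeriv 2 u t = g (u t) := by
  rw [iteratedDeriv_succ, iteratedDeriv_one, (hu.hasDerivAt_deriv t).deriv]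

lemma contDiff (hu : IsNewtonSolution_s5 g u) (hg : ContDiff ℝ ∞ g) : ContDiff ℝ ∞ u := by
  refine contDiff_infty.2 fun n ↦ ?_
  induction n with
  | zero => exact contDiff_zero.2 hu.continuous
  | succ n ih =>
    have hgu : ContDiff ℝ n (deriv (deriv u)) := by
      rw [funext fun t ↦ (hu.hasDerivAt_deriv t).deriv]
      exact (hg.of_le (mod_cast le_top)).comp ih
    have hu' : ContDiff ℝ (n + 1) (deriv u) := contDiff_succ_iff_deriv.2
      ⟨fun t ↦ (hu.hasDerivAt_deriv t).differentiableAt, by simp, hgu⟩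
    exact contDiff_succ_iff_deriv (n := n).2
      ⟨fun t ↦ (hu.hasDerivAt t).differentiableAt, fun h ↦ absurd h (by simp),
        hu'.of_le le_self_add⟩

lemma isIntegralCurve (hu : IsNewtonSolution_s5 g u) :
    IsIntegralCurve (fun t ↦ (u t, deriv u t)) fun _ ↦ newtonField g :=
  fun t ↦ (hu.hasDerivAt t).prodMk (hu.hasDerivAt_deriv t)

lemma unique (hK : LipschitzWith K g) (hu : IsNewtonSolution_s5 g u) (hv : IsNewtonSolution_s5 g v)
    (h₀ : u 0 = v 0) (h₁ : deriv u 0 = deriv v 0) : u = v := by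
  have huv := ODE_solution_unique_univ (s := fun _ ↦ univ) (t₀ := 0)
    (fun _ ↦ (lipschitzWith_newtonField hK).lipschitzOnWith)
    (fun t ↦ ⟨hu.isIntegralCurve t, mem_univ _⟩) (fun t ↦ ⟨hv.isIntegralCurve t, mem_univ _⟩)
    (by simp [h₀, h₁])
  exact funext fun t ↦ congrArg Prod.fst (congrFun huv t)

lemma const {x : E} (hx : g x = 0) : IsNewtonSolution_s5 g fun _ ↦ x where
  hasDerivAt t := by simpa using hasDerivAt_const t x
  hasDerivAt_deriv t := by simpa [hx] using hasDerivAt_const t (0 : E)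

lemma comp_neg (hu : IsNewtonSolution_s5 g u) : IsNewtonSolution_s5 g fun t ↦ u (-t) := by
  have hderiv : deriv (fun t ↦ u (-t)) = fun t ↦ -deriv u (-t) := funext (deriv_comp_neg u)
  constructor <;> intro t <;> rw [hderiv]
  · simpa using! (hu.hasDerivAt (-t)).scomp t (hasDerivAt_neg t)
  · simpa using! ((hu.hasDerivAt_deriv (-t)).scomp t (hasDerivAt_neg t)).neg

lemma even (hK : LipschitzWith K g) (hu : IsNewtonSolution_s5 g u) (h₁ : deriv u 0 = 0) :
    Function.Even u :=
  congrFun (unique hK hu.comp_neg hu (by simp) (by simp [deriv_comp_neg, h₁]))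

lemma dist_le (hK : LipschitzWith K g) (hu : IsNewtonSolution_s5 g u) (hv : IsNewtonSolution_s5 g v)
    (hu₁ : deriv u 0 = 0) (hv₁ : deriv v 0 = 0) (t : ℝ) :
    dist (u t) (v t) ≤ dist (u 0) (v 0) * exp (max 1 K * |t|) := by
  wlog ht : 0 ≤ t generalizing t
  · simpa [hu.even hK hu₁ t, hv.even hK hv₁ t] using this (-t) (by linarith)
  calc dist (u t) (v t) ≤ dist (u t, deriv u t) (v t, deriv v t) := by
        rw [Prod.dist_eq]; exact le_max_left _ _
    _ ≤ dist (u 0, deriv u 0) (v 0, deriv v 0) * exp (↑(max 1 K) * t) :=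
      dist_le_of_isIntegralCurve (lipschitzWith_newtonField hK) hu.isIntegralCurve
        hv.isIntegralCurve ht
    _ = dist (u 0) (v 0) * exp (max 1 K * |t|) := by
      simp [Prod.dist_eq, hu₁, hv₁, abs_of_nonneg ht]

end IsNewtonSolution_s5

lemma continuous_uncurry_of_isNewtonSolution (hK : LipschitzWith K g) {U : E → ℝ → E}
    (hU : ∀ a, IsNewtonSolution_s5 g (U a)) (hU₀ : ∀ a, U a 0 = a) (hU₁ : ∀ a, deriv (U a) 0 = 0) :
    Continuous fun z : E × ℝ ↦ U z.1 z.2 := by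
  refine continuous_iff_continuousAt.2 fun ⟨a, t⟩ ↦ ?_
  set T : ℝ := |t| + 1
  set C : ℝ≥0 := ⟨exp (max 1 K * T), (exp_pos _).le⟩
  have hcont : ContinuousOn (fun z : E × ℝ ↦ U z.1 z.2) (univ ×ˢ Ioo (-T) T) := by
    refine continuousOn_prod_of_continuousOn_lipschitzOnWith _ C
      (fun a _ ↦ (hU a).continuous.continuousOn)
      fun s hs ↦ LipschitzOnWith.of_dist_le_mul fun a _ b _ ↦ ?_
    calc dist (U a s) (U b s) ≤ dist a b * exp (max 1 K * |s|) := by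
          simpa only [hU₀] using (hU a).dist_le hK (hU b) (hU₁ a) (hU₁ b) s
      _ ≤ dist a b * exp (max 1 K * T) := by gcongr; exact (abs_lt.2 hs).le
      _ = C * dist a b := mul_comm _ _
  have ht : t ∈ Ioo (-T) T := abs_lt.1 (lt_add_one |t|)
  exact hcont.continuousAt (prod_mem_nhds univ_mem (Ioo_mem_nhds ht.1 ht.2))

end Newton

section PhasePlane

variable {V : ℝ → ℝ} {u : ℝ → ℝ} {a b : ℝ}

namespace IsNewtonSolution_s5

lemma energy_eq (hV : Differentiable ℝ V) (hu : IsNewtonSolution_s5 (deriv V) u)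
    (h₁ : deriv u 0 = 0) (t : ℝ) : deriv u t ^ 2 / 2 = V (u t) - V (u 0) := by
  have hderiv (t : ℝ) : HasDerivAt (fun s ↦ deriv u s ^ 2 / 2 - V (u s)) 0 t := by
    refine ((((hu.hasDerivAt_deriv t).pow 2).div_const 2).sub
      ((hV (u t)).hasDerivAt.comp t (hu.hasDerivAt t))).congr_deriv ?_
    push_cast
    ring
  have henergy := is_const_of_deriv_eq_zero (fun t ↦ (hderiv t).differentiableAt)
    (fun t ↦ (hderiv t).deriv) t 0
  simp only [h₁] at henergy
  linarith

lemma le_initial (hV : Differentiable ℝ V) (hanti : StrictAntiOn V (Icc a b))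
    (hu : IsNewtonSolution_s5 (deriv V) u) (h₀ : u 0 ∈ Ico a b) (h₁ : deriv u 0 = 0) (t : ℝ) :
    u t ≤ u 0 := by
  by_contra! hlt
  obtain ⟨x, hx₀, hx⟩ := exists_between (lt_min hlt h₀.2)
  obtain ⟨s, rfl⟩ : x ∈ range u := mem_range_of_exists_le_of_exists_ge hu.continuous
    ⟨0, hx₀.le⟩ ⟨t, (hx.trans_le (min_le_left _ _)).le⟩
  have hVlt : V (u s) < V (u 0) := hanti (Ico_subset_Icc_self h₀)
    ⟨h₀.1.trans hx₀.le, (hx.trans_le (min_le_right _ _)).le⟩ hx₀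
  linarith [hu.energy_eq hV h₁ s, sq_nonneg (deriv u s)]

lemma lt_of_forall_le (hV : Differentiable ℝ V) (hanti : StrictAntiOn V (Icc a b))
    (hu : IsNewtonSolution_s5 (deriv V) u) (h₀ : u 0 ∈ Ioc a b) (h₁ : deriv u 0 = 0)
    {s : Set ℝ} (hs : IsOpen s) (hle : ∀ t ∈ s, a ≤ u t) : ∀ t ∈ s, a < u t := by
  refine fun t ht ↦ (hle t ht).lt_of_ne fun hat ↦ ?_
  have hmin : IsLocalMin u t := by
    filter_upwards [hs.mem_nhds ht] with r hr
    exact hat ▸ hle r hr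
  have henergy := hu.energy_eq hV h₁ t
  rw [hmin.deriv_eq_zero, ← hat] at henergy
  have hVlt : V (u 0) < V a :=
    hanti (left_mem_Icc.2 (h₀.1.le.trans h₀.2)) (Ioc_subset_Icc_self h₀) h₀.1
  linarith

end IsNewtonSolution_s5

-- Test `u'' + w² u ≤ 0` against `cos (w t)`, which is nonnegative on `[0, π / (2w)]`.
lemma nonpos_of_deriv_le_neg_sq_mul {u v f : ℝ → ℝ} {w ℓ : ℝ} (hw : 0 < w) (hℓ : 0 ≤ ℓ)
    (hwℓ : w * ℓ = π / 2)
    (hu : ∀ t ∈ Icc 0 ℓ, HasDerivAt u (v t) t) (hv : ∀ t ∈ Icc 0 ℓ, HasDerivAt v (f t) t)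
    (hv₀ : v 0 ≤ 0) (hf : ∀ t ∈ Icc 0 ℓ, f t ≤ -(w ^ 2 * u t)) : u ℓ ≤ 0 := by
  set Φ : ℝ → ℝ := fun t ↦ v t * cos (w * t) + u t * (w * sin (w * t)) with hΦ
  have hderiv : ∀ t ∈ Icc 0 ℓ, HasDerivAt Φ ((f t + w ^ 2 * u t) * cos (w * t)) t := by
    intro t ht
    have hwt : HasDerivAt (fun t ↦ w * t) w t := hasDerivAt_const_mul w
    refine (((hv t ht).mul hwt.cos).add ((hu t ht).mul (hwt.sin.const_mul w))).congr_deriv ?_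
    ring
  have hcos : ∀ t ∈ Icc 0 ℓ, 0 ≤ cos (w * t) := by
    intro t ht
    have hwt : w * t ≤ w * ℓ := mul_le_mul_of_nonneg_left ht.2 hw.le
    have hwt₀ : 0 ≤ w * t := mul_nonneg hw.le ht.1
    exact cos_nonneg_of_mem_Icc ⟨by linarith [pi_pos], by linarith⟩
  have hanti : AntitoneOn Φ (Icc 0 ℓ) := by
    refine antitoneOn_of_deriv_nonpos (convex_Icc 0 ℓ) (HasDerivAt.continuousOn hderiv)
      (fun t ht ↦ (hderiv t (interior_subset ht)).differentiableAt.differentiableWithinAt)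
      fun t ht ↦ ?_
    have ht := interior_subset ht
    rw [(hderiv t ht).deriv]
    exact mul_nonpos_of_nonpos_of_nonneg (by linarith [hf t ht]) (hcos t ht)
  have hΦle : u ℓ * w ≤ v 0 := by
    simpa [hΦ, hwℓ] using hanti (left_mem_Icc.2 hℓ) (right_mem_Icc.2 hℓ) hℓ
  exact nonpos_of_mul_nonpos_left (hΦle.trans hv₀) hw

lemma IsNewtonSolution_s5.exists_mem_Icc_nonpos {g : ℝ → ℝ} {δ w ℓ : ℝ} (hu : IsNewtonSolution_s5 g u)
    (h₁ : deriv u 0 = 0) (hw : 0 < w) (hℓ : 0 ≤ ℓ) (hwℓ : w * ℓ = π / 2) (huδ : ∀ t, u t ≤ δ)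
    (hg : ∀ x ∈ Ioc 0 δ, g x ≤ -(w ^ 2 * x)) : ∃ t ∈ Icc 0 ℓ, u t ≤ 0 := by
  by_contra! hpos
  have hle : u ℓ ≤ 0 := nonpos_of_deriv_le_neg_sq_mul hw hℓ hwℓ (fun t _ ↦ hu.hasDerivAt t)
    (fun t _ ↦ hu.hasDerivAt_deriv t) h₁.le fun t ht ↦ hg _ ⟨hpos t ht, huδ t⟩
  exact hle.not_gt (hpos ℓ (right_mem_Icc.2 hℓ))

end PhasePlane

section Shooting

lemma exists_forall_nonneg_and_eq_zero {X : Type*} [TopologicalSpace X] [CompactSpace X]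
    [Nonempty X] {f : ℝ → X → ℝ} (hf : Continuous fun z : ℝ × X ↦ f z.1 z.2) {a b : ℝ}
    (hab : a ≤ b) (ha : ∃ x, f a x ≤ 0) (hb : ∀ x, 0 ≤ f b x) :
    ∃ c ∈ Icc a b, (∀ x, 0 ≤ f c x) ∧ ∃ x, f c x = 0 := by
  have hfc (c : ℝ) : Continuous (f c) := hf.comp (Continuous.prodMk_right c)
  have hbdd (c : ℝ) : BddBelow (f c '' univ) := isCompact_univ.bddBelow_image (hfc c).continuousOn
  have hmin : Continuous fun c ↦ sInf (f c '' univ) := isCompact_univ.continuous_sInf hf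
  obtain ⟨x, hx⟩ := ha
  have hmina : sInf (f a '' univ) ≤ 0 := (csInf_le (hbdd a) ⟨x, trivial, rfl⟩).trans hx
  have hminb : 0 ≤ sInf (f b '' univ) :=
    le_csInf (univ_nonempty.image _) (by rintro _ ⟨x, -, rfl⟩; exact hb x)
  obtain ⟨c, hc, hc0⟩ := intermediate_value_Icc hab hmin.continuousOn ⟨hmina, hminb⟩
  obtain ⟨x, -, hx⟩ := isCompact_univ.exists_sInf_image_eq univ_nonempty (hfc c).continuousOn
  exact ⟨c, hc, fun y ↦ hc0 ▸ csInf_le (hbdd c) ⟨y, trivial, rfl⟩, x, hx.symm.trans hc0⟩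

lemma exists_mem_Ioo_forall_le_neg_mul {f : ℝ → ℝ} {f' k : ℝ} (hf : HasDerivAt f f' 0)
    (hf₀ : f 0 ≤ 0) (hk : f' < -k) : ∃ δ ∈ Ioo (0 : ℝ) 1, ∀ x ∈ Ioc 0 δ, f x ≤ -(k * x) := by
  have hslope : ∀ᶠ x in 𝓝[>] 0, slope f 0 x < -k :=
    ((hasDerivWithinAt_iff_tendsto_slope' self_notMem_Ioi).1
      hf.hasDerivWithinAt).eventually_lt_const hk
  obtain ⟨r, hr, hrk⟩ := (mem_nhdsGT_iff_exists_mem_Ioc_Ioo_subset zero_lt_one).1 hslope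
  obtain ⟨δ, hδ₀, hδr⟩ := exists_between hr.1
  refine ⟨δ, ⟨hδ₀, hδr.trans_le hr.2⟩, fun x hx ↦ ?_⟩
  have hxk : slope f 0 x < -k := hrk ⟨hx.1, hx.2.trans_lt hδr⟩
  rw [slope_def_field, sub_zero, div_lt_iff₀ hx.1] at hxk
  linarith

lemma nonpos_of_forall_Ioo_nonpos {f : ℝ → ℝ} {a b : ℝ} (hf : ContinuousAt f a) (hab : a < b)
    (hneg : ∀ x ∈ Ioo a b, f x ≤ 0) : f a ≤ 0 :=
  le_of_tendsto (hf.mono_left nhdsWithin_le_nhds)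
    (mem_of_superset (Ioo_mem_nhdsGT hab) hneg)

lemma exists_height_forall_exists_nonpos {V : ℝ → ℝ} {ℓ : ℝ} (hℓ : 0 < ℓ) (hV : ContDiff ℝ 2 V)
    (hneg : ∀ x ∈ Ioo 0 1, deriv V x < 0) (hV₂ : iteratedDeriv 2 V 0 < -(π / (2 * ℓ)) ^ 2) :
    ∃ δ ∈ Ioo (0 : ℝ) 1, ∀ u : ℝ → ℝ, IsNewtonSolution_s5 (deriv V) u → u 0 = δ → deriv u 0 = 0 →
      ∃ t ∈ Icc 0 ℓ, u t ≤ 0 := by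
  have hVd : Differentiable ℝ V := hV.differentiable two_ne_zero
  have hV' : ContDiff ℝ 1 (deriv V) := (contDiff_succ_iff_deriv.1 hV).2.2
  have hanti : StrictAntiOn V (Icc 0 1) :=
    strictAntiOn_of_deriv_neg (convex_Icc 0 1) hVd.continuous.continuousOn (by simpa using hneg)
  have hV₀ : deriv V 0 ≤ 0 := nonpos_of_forall_Ioo_nonpos hV'.continuous.continuousAt zero_lt_one
    fun x hx ↦ (hneg x hx).le
  rw [iteratedDeriv_succ, iteratedDeriv_one] at hV₂
  obtain ⟨δ, hδ, hδV⟩ := exists_mem_Ioo_forall_le_neg_mul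
    (hV'.differentiable one_ne_zero 0).hasDerivAt hV₀ hV₂
  refine ⟨δ, hδ, fun u hu hu₀ hu₁ ↦ ?_⟩
  have huδ (t : ℝ) : u t ≤ δ :=
    hu₀ ▸ hu.le_initial hVd hanti (hu₀ ▸ Ioo_subset_Ico_self hδ) hu₁ t
  exact hu.exists_mem_Icc_nonpos hu₁ (w := π / (2 * ℓ)) (by positivity) hℓ.le (by field_simp)
    huδ hδV

lemma exists_isNewtonSolution_dirichlet {V : ℝ → ℝ} {K : ℝ≥0} {ℓ : ℝ} (hℓ : 0 < ℓ)
    (hV : ContDiff ℝ 2 V) (hK : LipschitzWith K (deriv V)) (hV₁ : deriv V 1 = 0)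
    (hneg : ∀ x ∈ Ioo 0 1, deriv V x < 0) (hV₂ : iteratedDeriv 2 V 0 < -(π / (2 * ℓ)) ^ 2) :
    ∃ u : ℝ → ℝ, IsNewtonSolution_s5 (deriv V) u ∧ (∀ t ∈ Icc (-ℓ) ℓ, u t ∈ Icc 0 1) ∧
      u (-ℓ) = 0 ∧ u ℓ = 0 ∧ ∀ t ∈ Ioo (-ℓ) ℓ, 0 < u t := by
  have hVd : Differentiable ℝ V := hV.differentiable two_ne_zero
  have hV' : ContDiff ℝ 1 (deriv V) := (contDiff_succ_iff_deriv.1 hV).2.2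
  have hanti : StrictAntiOn V (Icc 0 1) :=
    strictAntiOn_of_deriv_neg (convex_Icc 0 1) hVd.continuous.continuousOn (by simpa using hneg)
  choose U hU hU₀ hU₁ using fun a ↦ exists_isNewtonSolution hV' hK a 0
  obtain ⟨δ, hδ, hδ_nonpos⟩ := exists_height_forall_exists_nonpos hℓ hV hneg hV₂
  have hδ_hits : ∃ t : Icc (-ℓ) ℓ, U δ t ≤ 0 := by
    obtain ⟨t, ht, hut⟩ := hδ_nonpos (U δ) (hU δ) (hU₀ δ) (hU₁ δ)
    exact ⟨⟨t, by linarith [ht.1], ht.2⟩, hut⟩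
  have hU_one : U 1 = fun _ ↦ 1 :=
    (hU 1).unique hK (.const hV₁) (hU₀ 1) (by simp [hU₁])
  have : Nonempty (Icc (-ℓ) ℓ) := ⟨0, by simp [hℓ.le]⟩
  obtain ⟨a, ha, ha_nonneg, ⟨t₀, ht₀⟩, hat₀⟩ := exists_forall_nonneg_and_eq_zero
    (f := fun a (t : Icc (-ℓ) ℓ) ↦ U a t)
    ((continuous_uncurry_of_isNewtonSolution hK hU hU₀ hU₁).comp
      (continuous_id.prodMap continuous_subtype_val)) hδ.2.le hδ_hits
    (by simp [hU_one])
  have ha_one : a ≠ 1 := by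
    rintro rfl
    simp [hU_one] at hat₀
  have ha' : a ∈ Ioo 0 1 := ⟨hδ.1.trans_le ha.1, ha.2.lt_of_ne ha_one⟩
  have hpos : ∀ t ∈ Ioo (-ℓ) ℓ, 0 < U a t :=
    (hU a).lt_of_forall_le hVd hanti (by simpa [hU₀] using ⟨ha'.1, ha'.2.le⟩) (hU₁ a) isOpen_Ioo
      fun t ht ↦ ha_nonneg ⟨t, Ioo_subset_Icc_self ht⟩
  have heven : Function.Even (U a) := (hU a).even hK (hU₁ a)
  have hend : U a ℓ = 0 := by
    rcases ht₀.1.eq_or_lt with rfl | hlt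
    · rwa [heven] at hat₀
    · obtain rfl : t₀ = ℓ := ht₀.2.eq_of_not_lt fun h ↦ (hpos t₀ ⟨hlt, h⟩).ne' hat₀
      exact hat₀
  refine ⟨U a, hU a, fun t ht ↦ ⟨ha_nonneg ⟨t, ht⟩, ?_⟩, (heven ℓ).trans hend, hend, hpos⟩
  calc U a t ≤ U a 0 :=
        (hU a).le_initial hVd hanti (by simpa [hU₀] using ⟨ha'.1.le, ha'.2⟩) (hU₁ a) t
    _ ≤ 1 := (hU₀ a).trans_le ha.2

end Shooting

lemma exists_contDiff_hasCompactSupport_eqOn_ball {E F : Type*} [NormedAddCommGroup E]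
    [NormedSpace ℝ E] [HasContDiffBump E] [FiniteDimensional ℝ E] [NormedAddCommGroup F]
    [NormedSpace ℝ F] {n : ℕ∞} {f : E → F} (hf : ContDiff ℝ n f) (c : E) {r : ℝ} (hr : 0 < r) :
    ∃ h : E → F, ContDiff ℝ n h ∧ HasCompactSupport h ∧ EqOn h f (Metric.ball c r) := by
  let χ : ContDiffBump c := ⟨r, r + 1, hr, lt_add_one r⟩
  refine ⟨fun x ↦ χ x • f x, χ.contDiff.smul hf, χ.hasCompactSupport.smul_right, fun x hx ↦ ?_⟩
  simp [χ.one_of_mem_closedBall (Metric.ball_subset_closedBall hx)]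

namespace IsDoubleWell

variable {W : ℝ → ℝ}

lemma deriv_zero (hW : IsDoubleWell W) : deriv W 0 = 0 := by
  have h := deriv_comp_neg W 0
  simp only [hW.even, neg_zero] at h
  linarith

lemma isMinOn_one (hW : IsDoubleWell W) : IsMinOn W univ 1 := fun x _ ↦ by
  simpa [(hW.eq_zero_iff 1).2 (.inl rfl)] using hW.nonneg x

lemma deriv_one (hW : IsDoubleWell W) : deriv W 1 = 0 :=
  (hW.isMinOn_one.isLocalMin univ_mem).deriv_eq_zero

lemma deriv_neg (hW : IsDoubleWell W) {x : ℝ} (hx : x ∈ Ioo 0 1) : deriv W x < 0 := by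
  by_contra! hnonneg
  have hmono : StrictMonoOn W (Icc x 1) := by
    refine strictMonoOn_of_deriv_pos (convex_Icc x 1) hW.smooth.continuous.continuousOn ?_
    rw [interior_Icc]
    intro y hy
    have hy₀ : 0 < y := hx.1.trans hy.1
    exact (div_pos_iff_of_pos_right hy₀).1 <|
      (div_nonneg hnonneg hx.1.le).trans_lt (hW.mono hx ⟨hy₀, hy.2⟩ hy.1)
  exact (hmono (left_mem_Icc.2 hx.2.le) (right_mem_Icc.2 hx.2.le) hx.2).not_ge
    (hW.isMinOn_one (mem_univ x))

lemma iteratedDeriv_two_zero_neg (hW : IsDoubleWell W) : iteratedDeriv 2 W 0 < 0 := by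
  have hdiff : DifferentiableAt ℝ (deriv W) 0 :=
    ((contDiff_infty_iff_deriv.1 hW.smooth).2.differentiable (by simp)) 0
  have hhalf : (1 / 2 : ℝ) ∈ Ioo 0 1 := by norm_num
  have hle : deriv (deriv W) 0 ≤ deriv W (1 / 2) / (1 / 2) := by
    refine le_of_tendsto ((hasDerivWithinAt_iff_tendsto_slope' self_notMem_Ioi).1
      hdiff.hasDerivAt.hasDerivWithinAt) ?_
    filter_upwards [Ioo_mem_nhdsGT hhalf.1] with x hx
    simpa [slope_def_field, hW.deriv_zero] using
      (hW.mono ⟨hx.1, hx.2.trans hhalf.2⟩ hhalf hx.2).le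
  rw [iteratedDeriv_succ, iteratedDeriv_one]
  exact hle.trans_lt (div_neg_of_neg_of_pos (hW.deriv_neg hhalf) hhalf.1)

end IsDoubleWell

lemma exists_contDiff_dirichlet {V : ℝ → ℝ} {ℓ : ℝ} (hℓ : 0 < ℓ) (hV : ContDiff ℝ ∞ V)
    (hV₁ : deriv V 1 = 0) (hneg : ∀ x ∈ Ioo 0 1, deriv V x < 0)
    (hV₂ : iteratedDeriv 2 V 0 < -(π / (2 * ℓ)) ^ 2) :
    ∃ u : ℝ → ℝ, ContDiff ℝ ∞ u ∧ (∀ t ∈ Icc (-ℓ) ℓ, u t ∈ Icc 0 1) ∧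
      (∀ t ∈ Icc (-ℓ) ℓ, iteratedDeriv 2 u t = deriv V (u t)) ∧
      u (-ℓ) = 0 ∧ u ℓ = 0 ∧ ∀ t ∈ Ioo (-ℓ) ℓ, 0 < u t := by
  obtain ⟨Q, hQ, hQc, hQV⟩ := exists_contDiff_hasCompactSupport_eqOn_ball hV 0 two_pos
  have hQVd : EqOn (deriv Q) (deriv V) (Metric.ball 0 2) := hQV.deriv Metric.isOpen_ball
  have hball : Icc 0 1 ⊆ Metric.ball (0 : ℝ) 2 := fun x hx ↦ by
    rw [mem_ball_zero_iff, Real.norm_of_nonneg hx.1]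
    linarith [hx.2]
  have hQ' : ContDiff ℝ ∞ (deriv Q) := (contDiff_infty_iff_deriv.1 hQ).2
  obtain ⟨K, hK⟩ := hQ'.lipschitzWith_of_hasCompactSupport hQc.deriv (by simp)
  obtain ⟨u, hu, humem, huneg, hupos⟩ := exists_isNewtonSolution_dirichlet hℓ
    (contDiff_infty.1 hQ 2) hK ((hQVd (hball (by simp))).trans hV₁)
    (fun x hx ↦ (hQVd (hball (Ioo_subset_Icc_self hx))).trans_lt (hneg x hx))
    ((hQV.iteratedDeriv_of_isOpen Metric.isOpen_ball 2 (hball (by simp))).trans_lt hV₂)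
  exact ⟨u, hu.contDiff hQ', humem,
    fun t ht ↦ (hu.iteratedDeriv_two t).trans (hQVd (hball (humem t ht))), huneg, hupos⟩

theorem exists_model_phase_transition_general {ℓ : ℝ} (hℓ : 0 < ℓ) {W : ℝ → ℝ}
    (hW : ContDiff ℝ ∞ W) (hW₁ : deriv W 1 = 0) (hneg : ∀ x ∈ Ioo 0 1, deriv W x < 0) {ε : ℝ}
    (hε : ε ∈ Ioo 0 (2 * ℓ / π * √(-iteratedDeriv 2 W 0))) :
    ∃ u : ℝ → ℝ, ContDiff ℝ ∞ u ∧ (∀ t ∈ Icc (-ℓ) ℓ, u t ∈ Icc 0 1) ∧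
      (∀ t ∈ Icc (-ℓ) ℓ, ε ^ 2 * iteratedDeriv 2 u t = deriv W (u t)) ∧
      u (-ℓ) = 0 ∧ u ℓ = 0 ∧ ∀ t ∈ Ioo (-ℓ) ℓ, 0 < u t := by
  have hε₀ : 0 < ε := hε.1
  have hderiv (x : ℝ) : deriv (fun y ↦ (ε ^ 2)⁻¹ * W y) x = (ε ^ 2)⁻¹ * deriv W x :=
    deriv_const_mul_field _
  have hthreshold : (ε ^ 2)⁻¹ * iteratedDeriv 2 W 0 < -(π / (2 * ℓ)) ^ 2 := by
    have hsq : (π / (2 * ℓ) * ε) ^ 2 < -iteratedDeriv 2 W 0 := by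
      refine (lt_sqrt (by positivity)).1 ?_
      calc π / (2 * ℓ) * ε < π / (2 * ℓ) * (2 * ℓ / π * √(-iteratedDeriv 2 W 0)) := by
            gcongr; exact hε.2
        _ = √(-iteratedDeriv 2 W 0) := by field_simp
    rw [inv_mul_lt_iff₀ (by positivity)]
    linarith [mul_pow (π / (2 * ℓ)) ε 2]
  obtain ⟨u, hu, humem, hode, hbdry⟩ := exists_contDiff_dirichlet hℓ
    (contDiff_const.mul hW : ContDiff ℝ ∞ fun x ↦ (ε ^ 2)⁻¹ * W x) (by simp [hderiv, hW₁])
    (fun x hx ↦ by rw [hderiv]; exact mul_neg_of_pos_of_neg (by positivity) (hneg x hx))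
    (by rwa [iteratedDeriv_const_mul_field])
  refine ⟨u, hu, humem, fun t ht ↦ ?_, hbdry⟩
  rw [hode t ht, hderiv, mul_inv_cancel_left₀ (by positivity)]

/-- **Model solutions.** For every `ℓ > 0` there is `ε₀ > 0` such that for
all `ε ∈ (0, ε₀)` there is a smooth `u : [-ℓ, ℓ] → [0, 1]` with `ε² u'' = W'(u)` on
`[-ℓ, ℓ]`, `u(±ℓ) = 0`, and `u > 0` on `(-ℓ, ℓ)`. -/
theorem exists_model_phase_transition
    {ℓ : ℝ} (hℓ : 0 < ℓ) {W : ℝ → ℝ} (hW : IsDoubleWell W) :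
    ∃ ε₀ > 0, ∀ ε : ℝ, ε ∈ Set.Ioo 0 ε₀ →
      ∃ u : ℝ → ℝ, ContDiff ℝ (⊤ : ℕ∞) u ∧
        (∀ t ∈ Set.Icc (-ℓ) ℓ, u t ∈ Set.Icc (0 : ℝ) 1) ∧
        (∀ t ∈ Set.Icc (-ℓ) ℓ, ε ^ 2 * iteratedDeriv 2 u t = deriv W (u t)) ∧
        u (-ℓ) = 0 ∧ u ℓ = 0 ∧ ∀ t ∈ Set.Ioo (-ℓ) ℓ, 0 < u t := by
  exact ⟨2 * ℓ / π * √(-iteratedDeriv 2 W 0),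
    mul_pos (by positivity) (sqrt_pos.2 (neg_pos.2 hW.iteratedDeriv_two_zero_neg)),
    fun _ ↦ exists_model_phase_transition_general hℓ hW.smooth hW.deriv_one fun _ ↦ hW.deriv_neg⟩
end
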